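/- arXiv:1611.09279 — 3 statements merged into one kernel-verified Lean document; each statement's English description precedes it below -/
import Mathlib

section
/- Let P be a partial order on {1,…,n} that is a unit interval order. Then P is canonically labeled if and only if the antiadjacency matrix of P is a Dyck matrix. -/
open Classical in
/-- The altitude of `i`: `|{j : j ≤_P i}| - |{j : i ≤_P j}|`. -/
noncomputable def altitude {n : ℕ} (P : PartialOrder (Fin n)) (i : Fin n) : ℤ :=
  ((Finset.univ.filter (fun j : Fin n => P.le j i)).card : ℤ) -
    ((Finset.univ.filter (fun j : Fin n => P.le i j)).card : ℤ)

/-- `P` is canonically labeled if `α(i) < α(j)` implies `i < j` as integers. -/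
def IsCanonicallyLabeled {n : ℕ} (P : PartialOrder (Fin n)) : Prop :=
  ∀ i j : Fin n, altitude P i < altitude P j → i < j

/-- A 0/1 matrix is a Dyck matrix: ones on and below the diagonal, and the zero entries form a
right-justified Young diagram anchored at the upper-right corner. -/
def IsDyckMatrix {n : ℕ} (A : Matrix (Fin n) (Fin n) ℝ) : Prop :=
  (∀ i j : Fin n, A i j = 0 ∨ A i j = 1) ∧
  (∀ i j : Fin n, (j : ℕ) ≤ (i : ℕ) → A i j = 1) ∧
  (∀ i j i' j' : Fin n, A i j = 0 → (i' : ℕ) ≤ (i : ℕ) → (j : ℕ) ≤ (j' : ℕ) → A i' j' = 0)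

/-!
For a strict order `<`, set `i ≼ j` when every element below `i` is below `j` and every element
above `j` is above `i`. The altitude is monotone for the preorder `≼`, and if `j ≼ i` while
`α(i) ≤ α(j)`, then the inclusions defining `j ≼ i` are equalities of finite sets, so `i ≼ j`.
Hence, when `≼` is total, comparing altitudes is the same as comparing by `≼`. A unit interval
representation `q` makes `≼` total, since `q i ≤ q j` implies `i ≼ j`. On the other hand, the
antiadjacency matrix is a Dyck matrix exactly when `i ≤ j` as integers implies `i ≼ j`.
-/

/-- The trace of a relation `r`: the preorder comparing elements by inclusion of their sets of
predecessors and reverse inclusion of their sets of successors. A strict order whose trace is total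
is a semiorder. -/
def TraceLE {α : Type*} (r : α → α → Prop) (i j : α) : Prop :=
  (∀ k, r k i → r k j) ∧ (∀ k, r j k → r i k)

section Representation

variable {α β : Type*} [LinearOrder β] {r : α → α → Prop} {q : α → β} {s : β → β}

-- The intervals are `[q i, s (q i)]`; unit intervals are the case `s x = x + 1`.
theorem traceLE_of_le (hs : Monotone s) (hr : ∀ i j, r i j ↔ s (q i) < q j) {i j : α}
    (hij : q i ≤ q j) : TraceLE r i j := by
  simp only [TraceLE, hr]
  exact ⟨fun _ hk => hk.trans_le hij, fun _ hk => (hs hij).trans_lt hk⟩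

theorem total_traceLE_of_monotone (hs : Monotone s) (hr : ∀ i j, r i j ↔ s (q i) < q j) :
    Std.Total (TraceLE r) :=
  ⟨fun i j => (le_total (q i) (q j)).imp (traceLE_of_le hs hr) (traceLE_of_le hs hr)⟩

end Representation

section Altitude

open Classical in
theorem card_filter_le_eq_card_filter_lt_add_one {α : Type*} [Fintype α] [PartialOrder α] (i : α) :
    (Finset.univ.filter (· ≤ i)).card = (Finset.univ.filter (· < i)).card + 1 := by
  have h_insert : Finset.univ.filter (· ≤ i) = insert i (Finset.univ.filter (· < i)) := by
    ext j
    simp only [Finset.mem_filter_univ, Finset.mem_insert, le_iff_eq_or_lt]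
  rw [h_insert, Finset.card_insert_of_notMem (by simp)]

open Classical in
theorem altitude_eq_card_filter_lt_sub {n : ℕ} (P : PartialOrder (Fin n)) (i : Fin n) :
    altitude P i = ((Finset.univ.filter (fun j => P.lt j i)).card : ℤ) -
      ((Finset.univ.filter (fun j => P.lt i j)).card : ℤ) := by
  have h_below := @card_filter_le_eq_card_filter_lt_add_one (Fin n) _ P i
  have h_above := @card_filter_le_eq_card_filter_lt_add_one (Fin n)ᵒᵈ _
    (@OrderDual.instPartialOrder _ P) i
  change (Finset.univ.filter (fun j => P.le i j)).card =
    (Finset.univ.filter (fun j => P.lt i j)).card + 1 at h_above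
  rw [altitude, h_below, h_above, Nat.cast_succ, Nat.cast_succ, add_sub_add_right_eq_sub]

variable {n : ℕ} {P : PartialOrder (Fin n)} {i j : Fin n}

theorem TraceLE.altitude_le (h : TraceLE P.lt i j) : altitude P i ≤ altitude P j := by
  classical
  rw [altitude_eq_card_filter_lt_sub, altitude_eq_card_filter_lt_sub]
  have h_below := Finset.card_le_card (Finset.monotone_filter_right .univ fun k _ => h.1 k)
  have h_above := Finset.card_le_card (Finset.monotone_filter_right .univ fun k _ => h.2 k)
  exact sub_le_sub (Nat.cast_le.2 h_below) (Nat.cast_le.2 h_above)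

theorem TraceLE.symm_of_altitude_le (h : TraceLE P.lt j i) (h_alt : altitude P i ≤ altitude P j) :
    TraceLE P.lt i j := by
  classical
  rw [altitude_eq_card_filter_lt_sub, altitude_eq_card_filter_lt_sub] at h_alt
  have h_below : Finset.univ.filter (fun k => P.lt k j) ⊆ Finset.univ.filter (fun k => P.lt k i) :=
    Finset.monotone_filter_right _ fun k _ => h.1 k
  have h_above : Finset.univ.filter (fun k => P.lt i k) ⊆ Finset.univ.filter (fun k => P.lt j k) :=
    Finset.monotone_filter_right _ fun k _ => h.2 k
  have h_card_below := Finset.card_le_card h_below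
  have h_card_above := Finset.card_le_card h_above
  have h_below_eq := Finset.eq_of_subset_of_card_le h_below (by omega)
  have h_above_eq := Finset.eq_of_subset_of_card_le h_above (by omega)
  simp only [Finset.filter_inj', Finset.mem_univ, true_imp_iff] at h_below_eq h_above_eq
  exact ⟨fun k => (@h_below_eq k).2, fun k => (@h_above_eq k).2⟩

theorem altitude_le_iff_traceLE [Std.Total (TraceLE P.lt)] :
    altitude P i ≤ altitude P j ↔ TraceLE P.lt i j :=
  ⟨fun h_alt => (Std.Total.total i j).elim id fun h => TraceLE.symm_of_altitude_le h h_alt,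
    TraceLE.altitude_le⟩

theorem isCanonicallyLabeled_and_total_traceLE_iff :
    IsCanonicallyLabeled P ∧ Std.Total (TraceLE P.lt) ↔
      ∀ i j : Fin n, (i : ℕ) ≤ j → TraceLE P.lt i j := by
  constructor
  · rintro ⟨h_canon, _⟩ i j hij
    exact altitude_le_iff_traceLE.1 (le_of_not_gt fun h_lt => (h_canon j i h_lt).not_ge hij)
  · intro h
    exact ⟨fun i j h_lt => lt_of_not_ge fun hji => (h j i hji).altitude_le.not_gt h_lt,
      ⟨fun i j => (le_total (i : ℕ) j).imp (h i j) (h j i)⟩⟩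

end Altitude

theorem isDyckMatrix_antiadjacency_iff {n : ℕ} (r : Fin n → Fin n → Prop) [DecidableRel r] :
    IsDyckMatrix (Matrix.of fun i j => if r i j then (0 : ℝ) else 1) ↔
      (∀ i j : Fin n, (j : ℕ) ≤ i → ¬ r i j) ∧
      (∀ i j i' j' : Fin n, r i j → (i' : ℕ) ≤ i → (j : ℕ) ≤ j' → r i' j') := by
  simp [IsDyckMatrix, em]

theorem isDyckMatrix_antiadjacency_iff_traceLE {n : ℕ} (r : Fin n → Fin n → Prop) [DecidableRel r]
    [Std.Irrefl r] :
    IsDyckMatrix (Matrix.of fun i j => if r i j then (0 : ℝ) else 1) ↔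
      ∀ i j : Fin n, (i : ℕ) ≤ j → TraceLE r i j := by
  rw [isDyckMatrix_antiadjacency_iff]
  constructor
  · rintro ⟨-, h_young⟩ i j hij
    exact ⟨fun k hki => h_young k i k j hki le_rfl hij, fun k hjk => h_young j k i k hjk hij le_rfl⟩
  · intro h
    refine ⟨fun i j hji hij => irrefl j ((h j i hji).2 j hij), fun i j i' j' hij hi hj => ?_⟩
    exact (h j j' hj).1 i' ((h i' i hi).2 j hij)

open Classical in
theorem isCanonicallyLabeled_iff_antiadjacency_isDyckMatrix_general
    {n : ℕ} (P : PartialOrder (Fin n)) :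
    IsCanonicallyLabeled P ∧ Std.Total (TraceLE P.lt) ↔
      IsDyckMatrix (Matrix.of fun i j : Fin n => if P.lt i j then (0 : ℝ) else 1) := by
  have : Std.Irrefl P.lt := ⟨@lt_irrefl _ P.toPreorder⟩
  rw [isCanonicallyLabeled_and_total_traceLE_iff, isDyckMatrix_antiadjacency_iff_traceLE]

open Classical in
/-- A unit interval order on `{1,…,n}` is canonically labeled iff its antiadjacency matrix is a
Dyck matrix. -/
theorem isCanonicallyLabeled_iff_antiadjacency_isDyckMatrix
    {n : ℕ} (P : PartialOrder (Fin n))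
    (hP : ∃ q : Fin n → ℝ, ∀ i j : Fin n, P.lt i j ↔ q i + 1 < q j) :
    IsCanonicallyLabeled P ↔
      IsDyckMatrix (Matrix.of fun i j : Fin n => if P.lt i j then (0 : ℝ) else 1) := by
  obtain ⟨q, hq⟩ := hP
  have h_total : Std.Total (TraceLE P.lt) := total_traceLE_of_monotone (add_left_mono (a := 1)) hq
  rw [← isCanonicallyLabeled_iff_antiadjacency_isDyckMatrix_general, and_iff_left h_total]
end

section
/- Let A be an n × n Dyck matrix regarded as a real matrix and B = ψ(A). Then for every column index c ∈ {1,…,2n}, the n × (2n−1) matrix obtained from B by deleting column c still has rank n. -/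
/-- Postnikov's map `ψ`: the `n × 2n` matrix whose first `n` columns form the identity and whose
entry in row `i`, column `n + j` (1-based) is `(-1)^(n-i) * a_{n+1-i, j}` (0-based here). -/
noncomputable def psiMat {n : ℕ} (A : Matrix (Fin n) (Fin n) ℝ) :
    Matrix (Fin n) (Fin (2 * n)) ℝ :=
  Matrix.of fun i c =>
    if hc : (c : ℕ) < n then (if (i : ℕ) = (c : ℕ) then 1 else 0)
    else (-1 : ℝ) ^ (n - 1 - (i : ℕ)) *
      A ⟨n - 1 - (i : ℕ), by have := i.isLt; omega⟩ ⟨(c : ℕ) - n, by have := c.isLt; omega⟩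

/-- The strictly increasing enumeration of `{1,…,2n} \ {c}`: the map `Fin (2n-1) → Fin (2n)`
skipping the index `c`. -/
def deleteCol {n : ℕ} (c : Fin (2 * n)) : Fin (2 * n - 1) → Fin (2 * n) :=
  fun j =>
    if h : (j : ℕ) < (c : ℕ) then ⟨(j : ℕ), by have := c.isLt; omega⟩
    else ⟨(j : ℕ) + 1, by have := j.isLt; omega⟩

/-!
A matrix `(1 | M)` loses row rank on deleting column `c` exactly when some nonzero row vector `v`
has `v ᵥ* (1 | M)` supported on `c`. If `c` belongs to `M`, the identity block forces `v = 0`. If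
`c` is the `i`-th column of the identity, then `v` is a multiple of the `i`-th unit vector, and
`v ᵥ* M`, a multiple of the `i`-th row of `M`, vanishes only if `v` or that row does. In a Dyck
matrix no row is zero because the diagonal is constantly `1`.
-/

section IdentityBlock

open Matrix

variable {m p : Type*} [Fintype m] [DecidableEq m]

theorem eq_zero_of_vecMul_fromCols_one_eq_zero_off {R : Type*} [Semiring R] [NoZeroDivisors R]
    {M : Matrix m p R} (hM : ∀ i, M i ≠ 0) {c : m ⊕ p} {v : m → R}
    (hv : ∀ d ≠ c, (v ᵥ* fromCols 1 M) d = 0) : v = 0 := by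
  simp only [vecMul_fromCols, vecMul_one] at hv
  rcases c with i | j
  · have v_eq_single : v = Pi.single i (v i) := by
      ext k
      by_cases hk : k = i
      · simp [hk]
      · simpa [hk] using hv (.inl k) (by simpa using hk)
    obtain ⟨j, hj⟩ := Function.ne_iff.mp (hM i)
    have mul_entry_eq_zero : v i * M i j = 0 := by
      have h := hv (.inr j) Sum.inr_ne_inl
      rw [v_eq_single] at h
      simpa using h
    rw [v_eq_single, (mul_eq_zero.mp mul_entry_eq_zero).resolve_right hj, Pi.single_zero]
  · exact funext fun i ↦ hv (.inl i) Sum.inl_ne_inr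

theorem rank_submatrix_fromCols_one_eq_card {K l : Type*} [Field K] [Fintype l] {M : Matrix m p K}
    (hM : ∀ i, M i ≠ 0) {c : m ⊕ p} {f : l → m ⊕ p} (hf : {c}ᶜ ⊆ Set.range f) :
    ((fromCols 1 M).submatrix id f).rank = Fintype.card m := by
  refine LinearIndependent.rank_matrix (vecMul_injective_iff.mp ?_)
  rw [← coe_vecMulLinear, injective_iff_map_eq_zero]
  intro v hv
  refine eq_zero_of_vecMul_fromCols_one_eq_zero_off hM (c := c) fun d hd ↦ ?_
  obtain ⟨k, rfl⟩ := hf hd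
  exact congrFun hv k

end IdentityBlock

section Psi

variable {n : ℕ}

theorem range_deleteCol (c : Fin (2 * n)) : Set.range (deleteCol c) = {c}ᶜ := by
  ext k
  simp only [Set.mem_range, Set.mem_compl_singleton_iff, deleteCol]
  constructor
  · rintro ⟨j, rfl⟩
    split <;> (rw [ne_eq, Fin.ext_iff]; dsimp only; omega)
  · intro hk
    rcases lt_or_gt_of_ne (Fin.val_ne_of_ne hk) with hlt | hgt
    · exact ⟨⟨k, by omega⟩, by simp [hlt]⟩
    · refine ⟨⟨k - 1, by omega⟩, ?_⟩
      rw [dif_neg (by dsimp only; omega), Fin.ext_iff]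
      dsimp only
      omega

/-- The matrix `A` with its rows in reverse order and alternating signs, the last row having sign
`+`; for square `A` this is the right half of `psiMat A`. -/
def signedRowReversal {p R : Type*} [Ring R] (A : Matrix (Fin n) p R) : Matrix (Fin n) p R :=
  Matrix.of fun i ↦ (-1 : R) ^ (n - 1 - (i : ℕ)) • A i.rev

theorem signedRowReversal_row_ne_zero {p R : Type*} [Ring R] {A : Matrix (Fin n) p R}
    (hA : ∀ i, A i ≠ 0) (i : Fin n) : signedRowReversal A i ≠ 0 :=
  ((isUnit_one (M := R)).neg.pow _).smul_eq_zero.not.mpr (hA i.rev)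

/-- The splitting of the column indices of `psiMat` into a left and a right half, which exhibits
`psiMat A` as a block matrix. -/
def columnHalves (n : ℕ) : Fin n ⊕ Fin n ≃ Fin (2 * n) :=
  finSumFinEquiv.trans (finCongr (two_mul n).symm)

theorem psiMat_eq_submatrix_fromCols (A : Matrix (Fin n) (Fin n) ℝ) :
    psiMat A =
      (Matrix.fromCols 1 (signedRowReversal A)).submatrix id (columnHalves n).symm := by
  ext i c
  obtain ⟨d, rfl⟩ := (columnHalves n).surjective c
  rw [Matrix.submatrix_apply, Equiv.symm_apply_apply]
  rcases d with j | j
  · simp [psiMat, columnHalves, Matrix.one_apply, Fin.ext_iff]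
  · have rev_eq : (⟨n - 1 - i, by omega⟩ : Fin n) = i.rev := by
      rw [Fin.ext_iff, Fin.val_rev]; dsimp only; omega
    simp [psiMat, columnHalves, signedRowReversal, rev_eq]

theorem psi_dyckMatrix_rank_delete_column_general {A : Matrix (Fin n) (Fin n) ℝ}
    (hA : ∀ i, A i ≠ 0) (c : Fin (2 * n)) :
    ((psiMat A).submatrix id (deleteCol c)).rank = n := by
  have range_eq : Set.range ((columnHalves n).symm ∘ deleteCol c) = {(columnHalves n).symm c}ᶜ := by
    rw [Set.range_comp, range_deleteCol, Set.image_compl_eq (columnHalves n).symm.bijective,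
      Set.image_singleton]
  rw [psiMat_eq_submatrix_fromCols, Matrix.submatrix_submatrix, Function.comp_id]
  simpa using
    rank_submatrix_fromCols_one_eq_card (signedRowReversal_row_ne_zero hA) range_eq.superset

theorem IsDyckMatrix.row_ne_zero {A : Matrix (Fin n) (Fin n) ℝ} (hA : IsDyckMatrix A)
    (i : Fin n) : A i ≠ 0 := fun h ↦
  one_ne_zero ((hA.2.1 i i le_rfl).symm.trans (congrFun h i))

end Psi

/-- For a Dyck matrix `A`, deleting any single column from `B = ψ(A)` leaves a matrix that
still has rank `n`. -/
theorem psi_dyckMatrix_rank_delete_column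
    {n : ℕ} (A : Matrix (Fin n) (Fin n) ℝ) (hA : IsDyckMatrix A) :
    ∀ c : Fin (2 * n), ((psiMat A).submatrix id (deleteCol c)).rank = n :=
  psi_dyckMatrix_rank_delete_column_general hA.row_ne_zero
end

section
/- Let A be an n × n Dyck matrix. Then π_A is a permutation of {1,…,2n}, and its inverse π_A^{-1} satisfies conditions (1)–(2); in particular, π_A^{-1} is a single 2n-cycle through 1. -/
/-- The `j`-th column (1-based, `1 ≤ j ≤ 2n`) of `B = ψ(A)`, as a vector. -/
noncomputable def colB {n : ℕ} (A : Matrix (Fin n) (Fin n) ℝ) (j : ℕ) : Fin n → ℝ :=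
  fun r => if h : j - 1 < 2 * n then psiMat A r ⟨j - 1, h⟩ else 0

/-- The set of principal indices `J = {j ∈ {n+1,…,2n} : B_j ≠ B_{j-1}}` (1-based). -/
def JSet {n : ℕ} (A : Matrix (Fin n) (Fin n) ℝ) : Set ℕ :=
  {j | n + 1 ≤ j ∧ j ≤ 2 * n ∧ colB A j ≠ colB A (j - 1)}

open Classical in
/-- The weight map `ω` (1-based). -/
noncomputable def omegaB {n : ℕ} (A : Matrix (Fin n) (Fin n) ℝ) (j : ℕ) : ℕ :=
  if j ≤ n then j
  else (Finset.univ.filter fun r : Fin n => colB A j r ≠ 0).card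

open Classical in
/-- The map `π_A` on `{1,…,2n}` (1-based). -/
noncomputable def piA {n : ℕ} (A : Matrix (Fin n) (Fin n) ℝ) : ℕ → ℕ := fun i =>
  if i = 1 then n + 1
  else if i ≤ n then
    (if h : ∃ j, j ∈ JSet A ∧ omegaB A j = i - 1 then h.choose else i - 1)
  else if i < 2 * n then (if i + 1 ∈ JSet A then omegaB A i else i + 1)
  else omegaB A (2 * n)

/-- Conditions (1)–(2) for a permutation of `{1,…,2n}` (encoded 0-based on `Fin (2n)`). -/
def SatisfiesConds (n : ℕ) (hn : 0 < n) (σ : Equiv.Perm (Fin (2 * n))) : Prop :=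
  ∀ one : Fin (2 * n), one = ⟨0, by omega⟩ →
    ((∀ m : Fin (2 * n), ∃ k, k < 2 * n ∧ (σ ^ k) one = m) ∧
     (∀ k l : ℕ, k < l → l < 2 * n →
        ((σ ^ k) one : ℕ) < n → ((σ ^ l) one : ℕ) < n →
        ((σ ^ k) one : ℕ) < ((σ ^ l) one : ℕ)) ∧
     (∀ k l : ℕ, k < l → l < 2 * n →
        n ≤ ((σ ^ k) one : ℕ) → n ≤ ((σ ^ l) one : ℕ) →
        ((σ ^ l) one : ℕ) < ((σ ^ k) one : ℕ)) ∧
     (∀ k : ℕ, 1 ≤ k → k ≤ 2 * n - 1 →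
        ((Finset.range (k + 1)).filter (fun t => n ≤ ((σ ^ t) one : ℕ))).card ≤
        ((Finset.range (k + 1)).filter (fun t => ((σ ^ t) one : ℕ) < n)).card))

/-!
The Dyck path bounding the zero entries of `A`, traversed from the lower-right corner, has `n`
vertical and `n` horizontal steps. Label the vertical steps by `1, …, n` in increasing and the
horizontal steps by `n + 1, …, 2n` in decreasing order along the path; the vertical step `i` then
precedes the horizontal step `x` exactly when `i ≤ ω(x)`. The case distinctions in `π_A` say that it
sends every label to the label just before it on the path, and the first label `1` to the last label
`n + 1`. So `π_A` is a cyclic shift of the sequence of labels and its inverse reads them in path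
order, which gives condition (1). Condition (2) holds because the horizontal step `x` comes after
the vertical step `2n + 1 - x`, as the path stays on one side of the diagonal.
-/

section CyclicShift

variable {α : Type*} {σ : Equiv.Perm α} {p : α → ℕ} {m : ℕ} {a : α}

theorem pos_pow_apply_eq_mod (hσ : ∀ x, p (σ x) = (p x + 1) % m) (ha : p a = 0) (k : ℕ) :
    p ((σ ^ k) a) = k % m := by
  induction k with
  | zero => simp [ha]
  | succ k ih => rw [pow_succ', Equiv.Perm.mul_apply, hσ, ih, Nat.mod_add_mod]

theorem exists_pow_apply_eq_of_card_eq [Finite α] (hm : Nat.card α = m)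
    (hσ : ∀ x, p (σ x) = (p x + 1) % m) (ha : p a = 0) (b : α) :
    ∃ k < m, (σ ^ k) a = b := by
  have orbit_injective : Function.Injective fun k : Fin m => (σ ^ (k : ℕ)) a := fun k l hkl => by
    have hpos := congrArg p hkl
    simpa [pos_pow_apply_eq_mod hσ ha, Nat.mod_eq_of_lt, Fin.ext_iff] using hpos
  have orbit_surjective := (orbit_injective.bijective_of_nat_card_le (by simp [hm])).surjective
  obtain ⟨k, hk⟩ := orbit_surjective b
  exact ⟨k, k.isLt, hk⟩

end CyclicShift

theorem exists_perm_fin_of_bijOn_Icc {m : ℕ} {f : ℕ → ℕ}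
    (hf : Set.BijOn f (Set.Icc 1 m) (Set.Icc 1 m)) :
    ∃ σ : Equiv.Perm (Fin m), ∀ x : Fin m, f ((σ x : ℕ) + 1) = (x : ℕ) + 1 := by
  have hpre (x : Fin m) : ∃ y : Fin m, f ((y : ℕ) + 1) = (x : ℕ) + 1 := by
    obtain ⟨y, hy, hyx⟩ := hf.surjOn (show (x : ℕ) + 1 ∈ Set.Icc 1 m from ⟨by omega, by omega⟩)
    rw [Set.mem_Icc] at hy
    exact ⟨⟨y - 1, by omega⟩, by rwa [Nat.sub_add_cancel hy.1]⟩
  choose g hg using hpre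
  have g_injective : Function.Injective g := fun x y hxy => by
    have := hg x
    rw [hxy, hg y] at this
    omega
  exact ⟨Equiv.ofBijective g (Finite.injective_iff_bijective.1 g_injective), hg⟩

theorem satisfiesConds_of_pos {n : ℕ} (hn : 0 < n) {σ : Equiv.Perm (Fin (2 * n))}
    {p : Fin (2 * n) → ℕ} (hσ : ∀ x, p (σ x) = (p x + 1) % (2 * n)) (hzero : p ⟨0, by omega⟩ = 0)
    (hmono : StrictMonoOn p {x | (x : ℕ) < n}) (hanti : StrictAntiOn p {x | n ≤ (x : ℕ)})
    (hrev : ∀ x : Fin (2 * n), n ≤ (x : ℕ) → p x.rev < p x) :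
    SatisfiesConds n hn σ := by
  rintro one rfl
  set one : Fin (2 * n) := ⟨0, by omega⟩
  have pos_pow {k : ℕ} (hk : k < 2 * n) : p ((σ ^ k) one) = k := by
    rw [pos_pow_apply_eq_mod hσ hzero, Nat.mod_eq_of_lt hk]
  have orbit := exists_pow_apply_eq_of_card_eq (by simp) hσ hzero
  have pow_pos_apply (x : Fin (2 * n)) : (σ ^ p x) one = x := by
    obtain ⟨k, hk, rfl⟩ := orbit x
    rw [pos_pow hk]
  refine ⟨orbit, fun k l hkl hl hk' hl' => ?_, fun k l hkl hl hk' hl' => ?_, fun k _ hk => ?_⟩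
  · exact (hmono.lt_iff_lt hk' hl').1 (by rwa [pos_pow (hkl.trans hl), pos_pow hl])
  · exact (hanti.lt_iff_gt hk' hl').1 (by rwa [pos_pow (hkl.trans hl), pos_pow hl])
  · refine Finset.card_le_card_of_injOn (fun t => p ((σ ^ t) one).rev) (fun t ht => ?_)
      fun t ht t' ht' htt' => ?_
    · simp only [Finset.coe_filter, Finset.mem_range, Set.mem_ofPred_eq] at ht ⊢
      have hlt := hrev _ ht.2
      rw [pos_pow (by omega)] at hlt
      rw [pow_pos_apply, Fin.val_rev]
      omega
    · simp only [Finset.coe_filter, Finset.mem_range, Set.mem_ofPred_eq] at ht ht'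
      have p_injective : Function.Injective p :=
        Function.LeftInverse.injective (g := fun k => (σ ^ k) one) pow_pos_apply
      rw [← pos_pow (k := t) (by omega), Fin.rev_injective (p_injective htt'),
        pos_pow (by omega)]

section LatticePath

/-- The weight sequence of a lattice path: `w x`, for `n < x ≤ 2n`, is the number of vertical steps
before the horizontal step labelled `x`, so that `n + 1 ≤ w (n + j) + j` confines the path to one
side of the diagonal. This is what a Dyck matrix contributes through `ω`; values of `w` outside
`(n, 2n]` are ignored. -/
structure IsDyckWeight (n : ℕ) (w : ℕ → ℕ) : Prop where
  le : ∀ x ∈ Set.Ioc n (2 * n), w x ≤ n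
  antitoneOn : AntitoneOn w (Set.Ioc n (2 * n))
  two_mul_lt_add : ∀ x ∈ Set.Ioc n (2 * n), 2 * n < w x + x

/-- The number of horizontal steps before the vertical step `i` on the path with weights `w`. -/
def countBelow (n : ℕ) (w : ℕ → ℕ) (i : ℕ) : ℕ :=
  ((Finset.Ioc n (2 * n)).filter fun y => w y < i).card

/-- The position, counted from `0`, of the step labelled `x` on the path with weights `w`: the
number of vertical steps before it plus the number of horizontal steps before it. Labels are
`1, …, 2n`, those up to `n` being the vertical ones. -/
def pathPos (n : ℕ) (w : ℕ → ℕ) (x : ℕ) : ℕ :=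
  if x ≤ n then x - 1 + countBelow n w x else w x + (2 * n - x)

variable {n : ℕ} {w : ℕ → ℕ} {i x : ℕ}

theorem pathPos_of_le (hx : x ≤ n) : pathPos n w x = x - 1 + countBelow n w x := if_pos hx

theorem pathPos_of_lt (hx : n < x) : pathPos n w x = w x + (2 * n - x) := if_neg hx.not_ge

theorem countBelow_mono : Monotone (countBelow n w) := fun _ _ hij =>
  Finset.card_le_card <| Finset.monotone_filter_right _ fun _ _ hy => hy.trans_le hij

theorem pathPos_strictMonoOn : StrictMonoOn (pathPos n w) (Set.Icc 1 n) := by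
  intro i hi j hj hij
  rw [Set.mem_Icc] at hi hj
  rw [pathPos_of_le hi.2, pathPos_of_le hj.2]
  have := countBelow_mono (n := n) (w := w) hij.le
  omega

theorem pathPos_sub_one_add_one (hi : i ∈ Set.Ioc 1 n)
    (hne : ∀ y ∈ Set.Ioc n (2 * n), w y ≠ i - 1) :
    pathPos n w (i - 1) + 1 = pathPos n w i := by
  rw [Set.mem_Ioc] at hi
  have hcount : countBelow n w (i - 1) = countBelow n w i := by
    unfold countBelow
    congr 1
    refine Finset.filter_congr fun y hy => ?_
    have := hne y (Finset.mem_Ioc.1 hy)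
    omega
  rw [pathPos_of_le hi.2, pathPos_of_le (by omega), hcount]
  omega

theorem pathPos_succ_add_one_of_eq (hx : n < x) (hx' : x < 2 * n) (heq : w (x + 1) = w x) :
    pathPos n w (x + 1) + 1 = pathPos n w x := by
  rw [pathPos_of_lt hx, pathPos_of_lt (by omega), heq]
  omega

namespace IsDyckWeight

theorem apply_succ_eq (hw : IsDyckWeight n w) (hn : 0 < n) : w (n + 1) = n := by
  have hmem : n + 1 ∈ Set.Ioc n (2 * n) := ⟨by omega, by omega⟩
  have := hw.le _ hmem
  have := hw.two_mul_lt_add _ hmem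
  omega

theorem one_le (hw : IsDyckWeight n w) (hx : x ∈ Set.Ioc n (2 * n)) : 1 ≤ w x := by
  have := hw.two_mul_lt_add x hx
  have := hx.2
  omega

theorem countBelow_le_iff (hw : IsDyckWeight n w) (hx : x ∈ Set.Ioc n (2 * n)) :
    countBelow n w i ≤ 2 * n - x ↔ i ≤ w x := by
  constructor
  · contrapose!
    intro hlt
    have hsub : Finset.Icc x (2 * n) ⊆ (Finset.Ioc n (2 * n)).filter fun y => w y < i := by
      intro y hy
      rw [Finset.mem_Icc] at hy
      have hy' : y ∈ Set.Ioc n (2 * n) := ⟨hx.1.trans_le hy.1, hy.2⟩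
      exact Finset.mem_filter.2 ⟨Finset.mem_Ioc.2 hy', (hw.antitoneOn hx hy' hy.1).trans_lt hlt⟩
    have hcard : 2 * n + 1 - x ≤ countBelow n w i := by
      simpa only [Nat.card_Icc, countBelow] using Finset.card_le_card hsub
    have := hx.2
    omega
  · intro hle
    have hsub : ((Finset.Ioc n (2 * n)).filter fun y => w y < i) ⊆ Finset.Ioc x (2 * n) := by
      intro y hy
      obtain ⟨hy, hlt⟩ := Finset.mem_filter.1 hy
      rw [Finset.mem_Ioc] at hy ⊢
      refine ⟨lt_of_not_ge fun hyx => ?_, hy.2⟩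
      exact (hle.trans (hw.antitoneOn hy hx hyx)).not_gt hlt
    simpa [countBelow] using Finset.card_le_card hsub

theorem countBelow_eq (hw : IsDyckWeight n w) (hx : x ∈ Set.Ioc n (2 * n)) (hle : i ≤ w x)
    (hlt : x < 2 * n → w (x + 1) < i) : countBelow n w i = 2 * n - x := by
  refine ((hw.countBelow_le_iff hx).2 hle).antisymm ?_
  rcases hx.2.eq_or_lt with rfl | hx'
  · simp
  · have := (hw.countBelow_le_iff ⟨by have := hx.1; omega, hx'⟩).not.2 (hlt hx').not_ge
    omega

theorem pathPos_lt_pathPos_iff (hw : IsDyckWeight n w) (hi : i ∈ Set.Icc 1 n)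
    (hx : x ∈ Set.Ioc n (2 * n)) : pathPos n w i < pathPos n w x ↔ i ≤ w x := by
  have := hw.countBelow_le_iff (i := i) hx
  rw [Set.mem_Icc] at hi
  rw [pathPos_of_le hi.2, pathPos_of_lt hx.1]
  omega

theorem pathPos_ne_pathPos (hw : IsDyckWeight n w) (hi : i ∈ Set.Icc 1 n)
    (hx : x ∈ Set.Ioc n (2 * n)) : pathPos n w i ≠ pathPos n w x := by
  have := hw.countBelow_le_iff (i := i) hx
  rw [Set.mem_Icc] at hi
  rw [pathPos_of_le hi.2, pathPos_of_lt hx.1]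
  omega

theorem pathPos_strictAntiOn (hw : IsDyckWeight n w) :
    StrictAntiOn (pathPos n w) (Set.Ioc n (2 * n)) := by
  intro x hx y hy hxy
  have := hw.antitoneOn hx hy hxy.le
  have := hy.2
  rw [pathPos_of_lt hx.1, pathPos_of_lt hy.1]
  omega

theorem pathPos_injOn (hw : IsDyckWeight n w) : Set.InjOn (pathPos n w) (Set.Icc 1 (2 * n)) := by
  have hsub : Set.Icc 1 (2 * n) ⊆ Set.Icc 1 n ∪ Set.Ioc n (2 * n) := fun x hx =>
    (le_or_gt x n).imp (fun h => ⟨hx.1, h⟩) fun h => ⟨h, hx.2⟩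
  have hdisj : Disjoint (Set.Icc 1 n) (Set.Ioc n (2 * n)) :=
    Set.disjoint_left.2 fun _ hi hx => hx.1.not_ge hi.2
  refine Set.InjOn.mono hsub <| (Set.injOn_union hdisj).2 ?_
  exact ⟨pathPos_strictMonoOn.injOn, hw.pathPos_strictAntiOn.injOn,
    fun i hi x hx => hw.pathPos_ne_pathPos hi hx⟩

theorem pathPos_rev_lt (hw : IsDyckWeight n w) (hx : x ∈ Set.Ioc n (2 * n)) :
    pathPos n w (2 * n + 1 - x) < pathPos n w x := by
  have := hw.two_mul_lt_add x hx
  have := hx.1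
  have := hx.2
  exact (hw.pathPos_lt_pathPos_iff ⟨by omega, by omega⟩ hx).2 (by omega)

theorem pathPos_lt (hw : IsDyckWeight n w) (hx : x ∈ Set.Icc 1 (2 * n)) :
    pathPos n w x < 2 * n := by
  have := hx.1
  have := hx.2
  rcases le_or_gt x n with hxn | hxn
  · have hmem : n + 1 ∈ Set.Ioc n (2 * n) := ⟨by omega, by omega⟩
    have := (hw.countBelow_le_iff hmem).2 (hxn.trans (hw.apply_succ_eq (by omega)).ge)
    rw [pathPos_of_le hxn]
    omega
  · have := hw.le x ⟨hxn, hx.2⟩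
    rw [pathPos_of_lt hxn]
    omega

theorem pathPos_one (hw : IsDyckWeight n w) (hn : 0 < n) : pathPos n w 1 = 0 := by
  have hmem : 2 * n ∈ Set.Ioc n (2 * n) := ⟨by omega, le_rfl⟩
  rw [pathPos_of_le hn, hw.countBelow_eq hmem (hw.one_le hmem) (absurd · (lt_irrefl _))]
  omega

theorem pathPos_succ_self_add_one (hw : IsDyckWeight n w) (hn : 0 < n) :
    pathPos n w (n + 1) + 1 = 2 * n := by
  rw [pathPos_of_lt (lt_add_one n), hw.apply_succ_eq hn]
  omega

theorem pathPos_apply_add_one (hw : IsDyckWeight n w) (hx : x ∈ Set.Ioc n (2 * n))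
    (hlt : x < 2 * n → w (x + 1) < w x) :
    pathPos n w (w x) + 1 = pathPos n w x := by
  have := hw.one_le hx
  rw [pathPos_of_le (hw.le x hx), pathPos_of_lt hx.1, hw.countBelow_eq hx le_rfl hlt]
  omega

theorem pathPos_succ_add_one_of_lt (hw : IsDyckWeight n w) (hx : n < x) (hx' : x < 2 * n)
    (hlt : w (x + 1) < w x) :
    pathPos n w (x + 1) + 1 = pathPos n w (w (x + 1) + 1) := by
  have hmem : x ∈ Set.Ioc n (2 * n) := ⟨hx, hx'.le⟩
  rw [pathPos_of_lt (by omega), pathPos_of_le (hlt.trans_le (hw.le x hmem)),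
    hw.countBelow_eq hmem hlt fun _ => Nat.lt_succ_self _]
  omega

end IsDyckWeight

end LatticePath

section Columns

variable {n : ℕ} {A : Matrix (Fin n) (Fin n) ℝ}

theorem colB_apply (j r : Fin n) :
    colB A (n + 1 + j) r = (-1) ^ (n - 1 - (r : ℕ)) * A.col j r.rev := by
  have hlt : n + 1 + (j : ℕ) - 1 < 2 * n := by omega
  have hge : ¬ n + 1 + (j : ℕ) - 1 < n := by omega
  simp only [colB, psiMat, dif_pos hlt, Matrix.of_apply, dif_neg hge, Matrix.col_apply]
  congr 2 <;> ext <;> simp only [Fin.val_rev] <;> omega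

theorem colB_eq_colB_iff {j k : Fin n} :
    colB A (n + 1 + j) = colB A (n + 1 + k) ↔ A.col j = A.col k := by
  have sign_ne_zero (r : Fin n) : (-1 : ℝ) ^ (n - 1 - (r : ℕ)) ≠ 0 := by simp
  simp only [funext_iff, colB_apply, mul_right_inj' (sign_ne_zero _)]
  exact (Fin.rev_surjective.forall (p := fun r => A.col j r = A.col k r)).symm

theorem omegaB_eq_ncard_support_col (j : Fin n) :
    omegaB A (n + 1 + j) = (Function.support (A.col j)).ncard := by
  have hpre : {r | colB A (n + 1 + j) r ≠ 0} = Fin.rev ⁻¹' Function.support (A.col j) := by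
    ext r
    simp [colB_apply]
  rw [omegaB, if_neg (by omega), ← Set.ncard_preimage_of_injective_subset_range
    Fin.rev_injective (by simp [Fin.rev_surjective.range_eq]), ← hpre, ← Set.ncard_coe_finset]
  simp

theorem exists_eq_add_of_mem_Ioc {x : ℕ} (hx : x ∈ Set.Ioc n (2 * n)) :
    ∃ j : Fin n, x = n + 1 + j := by
  rw [Set.mem_Ioc] at hx
  exact ⟨⟨x - (n + 1), by omega⟩, by dsimp only; omega⟩

namespace IsDyckMatrix

theorem support_col_antitone (hA : IsDyckMatrix A) : Antitone fun j => Function.support (A.col j) :=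
  fun j k hjk i hik hij => hik (hA.2.2 i j i k hij le_rfl hjk)

theorem le_ncard_support_col (hA : IsDyckMatrix A) (j : Fin n) :
    n - (j : ℕ) ≤ (Function.support (A.col j)).ncard := by
  have hsub : Set.Ici j ⊆ Function.support (A.col j) := fun i hi => by
    simp [hA.2.1 i j hi]
  rw [← Fin.card_Ici, ← Set.ncard_coe_finset, Finset.coe_Ici]
  exact Set.ncard_le_ncard hsub

theorem isDyckWeight_omegaB (hA : IsDyckMatrix A) : IsDyckWeight n (omegaB A) where
  le x hx := by
    obtain ⟨j, rfl⟩ := exists_eq_add_of_mem_Ioc hx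
    rw [omegaB_eq_ncard_support_col]
    simpa using Set.ncard_le_card (Function.support (A.col j))
  antitoneOn x hx y hy hxy := by
    obtain ⟨j, rfl⟩ := exists_eq_add_of_mem_Ioc hx
    obtain ⟨k, rfl⟩ := exists_eq_add_of_mem_Ioc hy
    rw [omegaB_eq_ncard_support_col, omegaB_eq_ncard_support_col]
    exact Set.ncard_le_ncard (hA.support_col_antitone (by simpa using hxy))
  two_mul_lt_add x hx := by
    obtain ⟨j, rfl⟩ := exists_eq_add_of_mem_Ioc hx
    have := hA.le_ncard_support_col j
    rw [omegaB_eq_ncard_support_col]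
    omega

theorem col_eq_of_support_eq (hA : IsDyckMatrix A) {j k : Fin n}
    (h : Function.support (A.col j) = Function.support (A.col k)) : A.col j = A.col k := by
  ext i
  have hi : A i j = 0 ↔ A i k = 0 := by simpa using not_congr (Set.ext_iff.1 h i)
  rcases hA.1 i j with hj | hj <;> rcases hA.1 i k with hk | hk <;> simp_all

-- The supports of the columns are nested, so equal weights already force equal columns.
theorem colB_eq_colB_iff_omegaB_eq (hA : IsDyckMatrix A) {j k : Fin n} (hjk : j ≤ k) :
    colB A (n + 1 + j) = colB A (n + 1 + k) ↔ omegaB A (n + 1 + j) = omegaB A (n + 1 + k) := by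
  rw [colB_eq_colB_iff, omegaB_eq_ncard_support_col, omegaB_eq_ncard_support_col]
  refine ⟨fun h => by rw [h], fun h => hA.col_eq_of_support_eq ?_⟩
  exact (Set.eq_of_subset_of_ncard_le (hA.support_col_antitone hjk) h.le).symm

theorem succ_mem_JSet_iff (hA : IsDyckMatrix A) {x : ℕ} (hx : n < x) (hx' : x < 2 * n) :
    x + 1 ∈ JSet A ↔ omegaB A (x + 1) < omegaB A x := by
  have hmem : x ∈ Set.Ioc n (2 * n) := ⟨hx, hx'.le⟩
  have hmem' : x + 1 ∈ Set.Ioc n (2 * n) := ⟨by omega, hx'⟩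
  have hle := hA.isDyckWeight_omegaB.antitoneOn hmem hmem' x.le_succ
  have hcol : colB A x = colB A (x + 1) ↔ omegaB A x = omegaB A (x + 1) := by
    obtain ⟨j, hj⟩ := exists_eq_add_of_mem_Ioc hmem
    obtain ⟨k, hk⟩ := exists_eq_add_of_mem_Ioc hmem'
    rw [hk, hj]
    exact hA.colB_eq_colB_iff_omegaB_eq (by omega)
  simp only [JSet, Set.mem_ofPred_eq, Nat.add_sub_cancel, ne_eq, eq_comm (a := colB A (x + 1)),
    hcol]
  omega

theorem exists_mem_JSet_omegaB_eq (hA : IsDyckMatrix A) {y : ℕ} (hy : y ∈ Set.Ioc n (2 * n))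
    (hlt : omegaB A y < n) : ∃ j ∈ JSet A, omegaB A j = omegaB A y := by
  obtain ⟨hny, hy⟩ := hy
  induction y, hny using Nat.le_induction with
  | base => exact absurd (hA.isDyckWeight_omegaB.apply_succ_eq (by omega)) hlt.ne
  | succ x hx ih =>
    by_cases hmem : x + 1 ∈ JSet A
    · exact ⟨x + 1, hmem, rfl⟩
    · have hle := hA.isDyckWeight_omegaB.antitoneOn ⟨hx, by omega⟩ ⟨by omega, hy⟩ x.le_succ
      have heq : omegaB A (x + 1) = omegaB A x :=
        hle.antisymm (not_lt.1 ((hA.succ_mem_JSet_iff hx hy).not.1 hmem))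
      rw [heq] at hlt ⊢
      exact ih hlt (by omega)

end IsDyckMatrix

end Columns

section Permutation

variable {n : ℕ} {A : Matrix (Fin n) (Fin n) ℝ} {x : ℕ}

theorem piA_one : piA A 1 = n + 1 := if_pos rfl

theorem piA_of_forall_ne (hx : x ∈ Set.Ioc 1 n) (h : ∀ j ∈ JSet A, omegaB A j ≠ x - 1) :
    piA A x = x - 1 := by
  have hne : ¬ ∃ j, j ∈ JSet A ∧ omegaB A j = x - 1 := by simpa using h
  rw [piA, if_neg hx.1.ne', if_pos hx.2, dif_neg hne]

theorem piA_spec_of_exists (hx : x ∈ Set.Ioc 1 n) (h : ∃ j ∈ JSet A, omegaB A j = x - 1) :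
    piA A x ∈ JSet A ∧ omegaB A (piA A x) = x - 1 := by
  rw [piA, if_neg hx.1.ne', if_pos hx.2, dif_pos h]
  exact h.choose_spec

theorem piA_of_succ_mem_JSet (hx : n < x) (h : x + 1 ∈ JSet A) : piA A x = omegaB A x := by
  have hx' : x < 2 * n := h.2.1
  rw [piA, if_neg (by omega), if_neg hx.not_ge, if_pos hx', if_pos h]

theorem piA_of_succ_notMem_JSet (hx : n < x) (hx' : x < 2 * n) (h : x + 1 ∉ JSet A) :
    piA A x = x + 1 := by
  rw [piA, if_neg (by omega), if_neg hx.not_ge, if_pos hx', if_neg h]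

theorem piA_two_mul (hn : 0 < n) : piA A (2 * n) = omegaB A (2 * n) := by
  rw [piA, if_neg (by omega), if_neg (by omega), if_neg (lt_irrefl _)]

namespace IsDyckMatrix

theorem piA_mem_Icc_and_pathPos_piA_add_one_of_le (hA : IsDyckMatrix A) (hx : x ∈ Set.Ioc 1 n) :
    piA A x ∈ Set.Icc 1 (2 * n) ∧
      pathPos n (omegaB A) (piA A x) + 1 = pathPos n (omegaB A) x := by
  have hw := hA.isDyckWeight_omegaB
  rw [Set.mem_Ioc] at hx
  by_cases h : ∃ j ∈ JSet A, omegaB A j = x - 1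
  · obtain ⟨hmem, homega⟩ := piA_spec_of_exists hx h
    obtain ⟨k, hk⟩ : ∃ k, piA A x = k + 1 := ⟨piA A x - 1, by have := hmem.1; omega⟩
    rw [hk] at hmem homega ⊢
    have hle : k + 1 ≤ 2 * n := hmem.2.1
    have hnk : n < k := by
      refine lt_of_le_of_ne (Nat.le_of_succ_le_succ hmem.1) ?_
      rintro rfl
      rw [hw.apply_succ_eq (by omega)] at homega
      omega
    have hlt := (hA.succ_mem_JSet_iff hnk hle).1 hmem
    have hx_eq : omegaB A (k + 1) + 1 = x := by omega
    exact ⟨⟨by omega, hle⟩, hx_eq ▸ hw.pathPos_succ_add_one_of_lt hnk hle hlt⟩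
  · have hne : ∀ y ∈ Set.Ioc n (2 * n), omegaB A y ≠ x - 1 := fun y hy hyx =>
      h (hyx ▸ hA.exists_mem_JSet_omegaB_eq hy (by omega))
    rw [piA_of_forall_ne hx fun j hj hjx => h ⟨j, hj, hjx⟩]
    exact ⟨⟨by omega, by omega⟩, pathPos_sub_one_add_one hx hne⟩

theorem piA_mem_Icc_and_pathPos_piA_add_one_of_lt (hA : IsDyckMatrix A)
    (hx : x ∈ Set.Ioc n (2 * n)) :
    piA A x ∈ Set.Icc 1 (2 * n) ∧
      pathPos n (omegaB A) (piA A x) + 1 = pathPos n (omegaB A) x := by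
  have hw := hA.isDyckWeight_omegaB
  have homega : omegaB A x ∈ Set.Icc 1 (2 * n) :=
    ⟨hw.one_le hx, (hw.le x hx).trans (by omega)⟩
  rcases hx.2.eq_or_lt with rfl | hx'
  · rw [piA_two_mul (by have := hx.1; omega)]
    exact ⟨homega, hw.pathPos_apply_add_one hx (absurd · (lt_irrefl _))⟩
  by_cases h : x + 1 ∈ JSet A
  · rw [piA_of_succ_mem_JSet hx.1 h]
    exact ⟨homega, hw.pathPos_apply_add_one hx fun _ => (hA.succ_mem_JSet_iff hx.1 hx').1 h⟩
  · have hle := hw.antitoneOn hx ⟨Nat.lt_succ_of_lt hx.1, hx'⟩ x.le_succ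
    have heq := hle.antisymm (not_lt.1 ((hA.succ_mem_JSet_iff hx.1 hx').not.1 h))
    rw [piA_of_succ_notMem_JSet hx.1 hx' h]
    exact ⟨⟨by omega, hx'⟩, pathPos_succ_add_one_of_eq hx.1 hx' heq⟩

theorem mapsTo_piA (hA : IsDyckMatrix A) :
    Set.MapsTo (piA A) (Set.Icc 1 (2 * n)) (Set.Icc 1 (2 * n)) := by
  intro x hx
  rcases hx.1.eq_or_lt with rfl | hx1
  · have := hx.2
    rw [piA_one]
    exact ⟨by omega, by omega⟩
  · rcases le_or_gt x n with hxn | hxn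
    · exact (hA.piA_mem_Icc_and_pathPos_piA_add_one_of_le ⟨hx1, hxn⟩).1
    · exact (hA.piA_mem_Icc_and_pathPos_piA_add_one_of_lt ⟨hxn, hx.2⟩).1

theorem pathPos_piA_add_one_mod (hA : IsDyckMatrix A) (hx : x ∈ Set.Icc 1 (2 * n)) :
    (pathPos n (omegaB A) (piA A x) + 1) % (2 * n) = pathPos n (omegaB A) x := by
  have hw := hA.isDyckWeight_omegaB
  rcases hx.1.eq_or_lt with rfl | hx1
  · have hn : 0 < n := by have := hx.2; omega
    rw [piA_one, hw.pathPos_succ_self_add_one hn, hw.pathPos_one hn, Nat.mod_self]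
  · have hpred : pathPos n (omegaB A) (piA A x) + 1 = pathPos n (omegaB A) x := by
      rcases le_or_gt x n with hxn | hxn
      · exact (hA.piA_mem_Icc_and_pathPos_piA_add_one_of_le ⟨hx1, hxn⟩).2
      · exact (hA.piA_mem_Icc_and_pathPos_piA_add_one_of_lt ⟨hxn, hx.2⟩).2
    rw [hpred, Nat.mod_eq_of_lt (hw.pathPos_lt hx)]

theorem bijOn_piA (hA : IsDyckMatrix A) :
    Set.BijOn (piA A) (Set.Icc 1 (2 * n)) (Set.Icc 1 (2 * n)) := by
  refine ((Set.finite_Icc 1 (2 * n)).injOn_iff_bijOn_of_mapsTo hA.mapsTo_piA).1 ?_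
  intro x hx y hy hxy
  apply hA.isDyckWeight_omegaB.pathPos_injOn hx hy
  rw [← hA.pathPos_piA_add_one_mod hx, ← hA.pathPos_piA_add_one_mod hy, hxy]

end IsDyckMatrix

end Permutation

/-- For every Dyck matrix `A`, the map `π_A` is a permutation of `{1,…,2n}` whose inverse
satisfies conditions (1)–(2); in particular the inverse is a single `2n`-cycle through `1`.
The inverse is encoded as the permutation `σ` of `Fin (2n)` (element `x` representing `x+1`)
such that `π_A(σ(x)) = x` for all `x`. -/
theorem piA_perm_and_inverse_satisfiesConds
    {n : ℕ} (hn : 0 < n) (A : Matrix (Fin n) (Fin n) ℝ) (hA : IsDyckMatrix A) :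
    Set.BijOn (piA A) (Set.Icc 1 (2 * n)) (Set.Icc 1 (2 * n)) ∧
    ∃ σ : Equiv.Perm (Fin (2 * n)),
      (∀ x : Fin (2 * n), piA A ((σ x : ℕ) + 1) = (x : ℕ) + 1) ∧
      SatisfiesConds n hn σ := by
  have hw := hA.isDyckWeight_omegaB
  obtain ⟨σ, hσ⟩ := exists_perm_fin_of_bijOn_Icc hA.bijOn_piA
  let pos (x : Fin (2 * n)) : ℕ := pathPos n (omegaB A) (x + 1)
  have pos_σ (x : Fin (2 * n)) : pos (σ x) = (pos x + 1) % (2 * n) := by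
    simpa only [hσ] using
      (hA.pathPos_piA_add_one_mod (x := (σ x : ℕ) + 1) ⟨by omega, by omega⟩).symm
  have pos_mono : StrictMonoOn pos {x | (x : ℕ) < n} := fun x hx y hy hxy =>
    pathPos_strictMonoOn ⟨by omega, hx⟩ ⟨by omega, hy⟩ (Nat.succ_lt_succ hxy)
  have pos_anti : StrictAntiOn pos {x | n ≤ (x : ℕ)} := fun x hx y hy hxy =>
    hw.pathPos_strictAntiOn ⟨Nat.lt_succ_of_le hx, x.isLt⟩ ⟨Nat.lt_succ_of_le hy, y.isLt⟩
      (Nat.succ_lt_succ hxy)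
  have pos_rev (x : Fin (2 * n)) (hx : n ≤ (x : ℕ)) : pos x.rev < pos x := by
    have hrev : (x.rev : ℕ) + 1 = 2 * n + 1 - (x + 1) := by rw [Fin.val_rev]; omega
    simpa only [pos, hrev] using hw.pathPos_rev_lt ⟨Nat.lt_succ_of_le hx, x.isLt⟩
  exact ⟨hA.bijOn_piA, σ, hσ,
    satisfiesConds_of_pos hn pos_σ (hw.pathPos_one hn) pos_mono pos_anti pos_rev⟩
end
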